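/- arXiv:2305.01301 — 3 statements merged into one kernel-verified Lean document; each statement's English description precedes it below -/
import Mathlib

section
/- Let n ≥ 1, 0 ≤ k ≤ n, and let S be an F₂-linear subspace of ((F₂)²)ⁿ of dimension n−k with S ⊆ S^⊥ₛ, where S^⊥ₛ is the dual of S with respect to the symplectic inner product. For 0 ≤ ℓ ≤ n let A'_ℓ = #{v ∈ S : wt(v) = ℓ}. Then for every 0 ≤ w ≤ n, the number L_w = #{v ∈ S^⊥ₛ \ S : wt(v) = w} of undetectable errors of weight w satisfies L_w = 2^{k−n} · Σ_{ℓ=0}^{n} Σ_{s=0}^{w} C(ℓ,s)·C(n−ℓ, w−s)·(−1)^s·3^{w−s}·A'_ℓ − A'_w. -/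
/-- Symplectic representation of a Pauli error pattern on `n` qubits:
the `i`-th component `(xᵢ, zᵢ) ∈ F₂ × F₂` encodes I, X, Z, Y as
`(0,0), (1,0), (0,1), (1,1)`. -/
abbrev PauliVec (n : ℕ) : Type := Fin n → ZMod 2 × ZMod 2

/-- The weight of a Pauli vector: the number of non-identity components. -/
def wt {n : ℕ} (v : PauliVec n) : ℕ := (Finset.univ.filter fun i => v i ≠ 0).card

/-- The symplectic inner product `⟨u,v⟩ = Σᵢ (uᵢ.x·vᵢ.z + uᵢ.z·vᵢ.x)` over `F₂`. -/
def symp {n : ℕ} (u v : PauliVec n) : ZMod 2 :=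
  ∑ i, ((u i).1 * (v i).2 + (u i).2 * (v i).1)

/-- The symplectic dual of a subspace `S`. -/
def sympDual {n : ℕ} (S : Submodule (ZMod 2) (PauliVec n)) : Set (PauliVec n) :=
  {v | ∀ s ∈ S, symp v s = 0}

/-!
Pair the letters of two finite additive alphabets `A` and `B` by a nondegenerate bicharacter, pair
words letterwise, and sum the resulting characters over all words `v` of weight `w` and all `s` in
a code `S`. Summing over `S` first, orthogonality leaves `|S|` times the number of words of weight
`w` in the dual code. Summing over `v` first gives a value of the Krawtchouk polynomial at the
weight of `s`: the generating function of these sums is `(1 - X) ^ wt s` times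
`(1 + (|A| - 1) X) ^ (n - wt s)`, because it factors over the letters. This is the MacWilliams
identity; for the commutation sign of Pauli operators, the dual code is the symplectic dual.
-/

section Krawtchouk

open Polynomial

lemma coeff_one_add_C_mul_X_pow {R : Type*} [CommSemiring R] (a : R) (m j : ℕ) :
    ((1 + C a * X) ^ m).coeff j = m.choose j * a ^ j := by
  have h : (1 + C a * X) ^ m = ((1 + X : R[X]) ^ m).comp (C a * X) := by simp
  rw [h, comp_C_mul_X_coeff, coeff_one_add_X_pow]

variable (R : Type*) [CommRing R]

/-- The value at `ℓ` of the Krawtchouk polynomial of degree `w` for words of length `n` over an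
alphabet with `q` letters. As the binomial coefficients are taken in `ℕ`, it is meaningful only for
`ℓ ≤ n`. -/
def krawtchouk (q n w ℓ : ℕ) : R :=
  ∑ j ∈ Finset.range (w + 1),
    (ℓ.choose j : R) * ((n - ℓ).choose (w - j) : R) * (-1) ^ j * ((q : R) - 1) ^ (w - j)

variable {R}

lemma coeff_pow_mul_pow_eq_krawtchouk (q n w ℓ : ℕ) :
    ((1 + C (-1 : R) * X) ^ ℓ * (1 + C ((q : R) - 1) * X) ^ (n - ℓ)).coeff w =
      krawtchouk R q n w ℓ := by
  simp only [coeff_mul, coeff_one_add_C_mul_X_pow, krawtchouk,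
    Finset.Nat.sum_antidiagonal_eq_sum_range_succ_mk]
  exact Finset.sum_congr rfl fun j _ => by ring

end Krawtchouk

section HammingNorm

variable {ι B R : Type*} [Fintype ι] [DecidableEq B] [Zero B]

lemma card_filter_eq_zero_eq_sub_hammingNorm (s : ι → B) :
    (Finset.univ.filter fun i => s i = 0).card = Fintype.card ι - hammingNorm s := by
  classical
  rw [hammingNorm, ← Finset.card_compl, Finset.compl_filter]
  simp only [not_not]

lemma sum_comp_hammingNorm [CommSemiring R] (C : Set (ι → B)) [Fintype C] (f : ℕ → R) :
    ∑ s : C, f (hammingNorm s.1) =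
      ∑ ℓ ∈ Finset.range (Fintype.card ι + 1), f ℓ * {s ∈ C | hammingNorm s = ℓ}.ncard := by
  classical
  have hmaps : ∀ s ∈ C.toFinset, hammingNorm s ∈ Finset.range (Fintype.card ι + 1) := fun s _ =>
    Finset.mem_range_succ_iff.2 hammingNorm_le_card_fintype
  have hncard (ℓ : ℕ) :
      {s ∈ C | hammingNorm s = ℓ}.ncard = (C.toFinset.filter (hammingNorm · = ℓ)).card := by
    rw [← Set.ncard_coe_finset]
    simp
  rw [Finset.sum_set_coe (f := fun s => f (hammingNorm s)),
    ← Finset.sum_fiberwise_of_maps_to' hmaps]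
  simp only [Finset.sum_const, nsmul_eq_mul, hncard, mul_comm]

end HammingNorm

section Orthogonality

variable {R : Type*} [CommSemiring R] [IsDomain R]

lemma sum_addSubgroup_addChar_eq_ite {G : Type*} [AddGroup G] (H : AddSubgroup G) [Fintype H]
    (ψ : AddChar G R) [Decidable (∀ s ∈ H, ψ s = 1)] :
    ∑ s : H, ψ s = if ∀ s ∈ H, ψ s = 1 then (Nat.card H : R) else 0 := by
  classical
  have htrivial : ψ.compAddMonoidHom H.subtype = 0 ↔ ∀ s ∈ H, ψ s = 1 := by
    simp [AddChar.eq_zero_iff]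
  simpa only [htrivial, Nat.card_eq_fintype_card, AddChar.compAddMonoidHom_apply,
    AddSubgroup.subtype_apply] using AddChar.sum_eq_ite (ψ.compAddMonoidHom H.subtype)

lemma sum_bicharacter_eq_ite {A B : Type*} [AddCommGroup A] [AddCommGroup B] [Fintype A]
    [DecidableEq B] {χ : A →+ AddChar B R} (hχ : ∀ b, (∀ a, χ a b = 1) → b = 0) (b : B) :
    ∑ a, χ a b = if b = 0 then (Fintype.card A : R) else 0 := by
  classical
  have htrivial : (AddChar.doubleDualEmb b).compAddMonoidHom χ = 0 ↔ b = 0 := by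
    simp only [AddChar.eq_zero_iff, AddChar.compAddMonoidHom_apply, AddChar.doubleDualEmb_apply]
    exact ⟨hχ b, by rintro rfl; simp⟩
  simpa only [htrivial, AddChar.compAddMonoidHom_apply, AddChar.doubleDualEmb_apply] using
    AddChar.sum_eq_ite ((AddChar.doubleDualEmb b).compAddMonoidHom χ)

end Orthogonality

section DualCode

variable {ι A B R : Type*} [Fintype ι] [AddCommGroup A] [AddCommGroup B] [CommMonoid R]

/-- The bicharacter on words of length `ι` induced by a bicharacter `χ` on letters: the character
`s ↦ ∏ i, χ (v i) (s i)` attached to a word `v`. -/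
def wordChar (χ : A →+ AddChar B R) (v : ι → A) : AddChar (ι → B) R :=
  ∑ i, (χ (v i)).compAddMonoidHom (Pi.evalAddMonoidHom (fun _ => B) i)

lemma wordChar_apply (χ : A →+ AddChar B R) (v : ι → A) (s : ι → B) :
    wordChar χ v s = ∏ i, χ (v i) (s i) := by
  simp [wordChar, AddChar.sum_apply]

/-- The dual of an additive code `S` with respect to a bicharacter `χ` on letters: the words whose
character is trivial on `S`. -/
def dualCode (χ : A →+ AddChar B R) (S : AddSubgroup (ι → B)) : Set (ι → A) :=
  {v | ∀ s ∈ S, wordChar χ v s = 1}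

end DualCode

section MacWilliams

open Polynomial

variable {ι A B R : Type*} [Fintype ι] [AddCommGroup A] [AddCommGroup B] [CommRing R] [IsDomain R]
  [Fintype A] [DecidableEq A] [DecidableEq B] {χ : A →+ AddChar B R}

lemma sum_C_bicharacter_mul_ite (hχ : ∀ b, (∀ a, χ a b = 1) → b = 0) (b : B) :
    ∑ a, C (χ a b) * (if a = 0 then 1 else X) =
      if b = 0 then 1 + C ((Fintype.card A : R) - 1) * X else 1 + C (-1) * X := by
  have hsplit (a : A) : C (χ a b) * (if a = 0 then 1 else X) =
      C (χ a b) * X + if a = 0 then 1 - X else 0 := by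
    by_cases ha : a = 0 <;> simp [ha]
  rw [Finset.sum_congr rfl fun a _ => hsplit a, Finset.sum_add_distrib, ← Finset.sum_mul,
    ← map_sum, sum_bicharacter_eq_ite hχ]
  by_cases hb : b = 0
  · rw [if_pos hb, if_pos hb, map_sub, map_natCast, map_one,
      Finset.sum_ite_eq' Finset.univ 0, if_pos (Finset.mem_univ _)]
    ring
  · rw [if_neg hb, if_neg hb, map_zero, map_neg, map_one,
      Finset.sum_ite_eq' Finset.univ 0, if_pos (Finset.mem_univ _)]
    ring

lemma sum_C_wordChar_mul_X_pow [DecidableEq ι] (hχ : ∀ b, (∀ a, χ a b = 1) → b = 0) (s : ι → B) :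
    ∑ v : ι → A, C (wordChar χ v s) * X ^ hammingNorm v =
      (1 + C (-1) * X) ^ hammingNorm s *
        (1 + C ((Fintype.card A : R) - 1) * X) ^ (Fintype.card ι - hammingNorm s) := by
  have hfactor (v : ι → A) : C (wordChar χ v s) * X ^ hammingNorm v =
      ∏ i, C (χ (v i) (s i)) * (if v i = 0 then 1 else X) := by
    rw [wordChar_apply, map_prod, Finset.prod_mul_distrib, Finset.prod_ite, Finset.prod_const_one,
      Finset.prod_const, one_mul, hammingNorm]
  calc ∑ v : ι → A, C (wordChar χ v s) * X ^ hammingNorm v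
      = ∏ i, ∑ a, C (χ a (s i)) * (if a = 0 then 1 else X) := by
        rw [Fintype.prod_sum]
        exact Finset.sum_congr rfl fun v _ => hfactor v
    _ = ∏ i, if s i = 0 then 1 + C ((Fintype.card A : R) - 1) * X else 1 + C (-1) * X :=
        Finset.prod_congr rfl fun i _ => sum_C_bicharacter_mul_ite hχ (s i)
    _ = _ := by
        rw [Finset.prod_ite, Finset.prod_const, Finset.prod_const,
          card_filter_eq_zero_eq_sub_hammingNorm, hammingNorm, mul_comm]

lemma sum_wordChar_hammingNorm_eq [DecidableEq ι] (hχ : ∀ b, (∀ a, χ a b = 1) → b = 0)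
    (s : ι → B) (w : ℕ) :
    ∑ v : ι → A with hammingNorm v = w, wordChar χ v s =
      krawtchouk R (Fintype.card A) (Fintype.card ι) w (hammingNorm s) := by
  rw [← coeff_pow_mul_pow_eq_krawtchouk, ← sum_C_wordChar_mul_X_pow hχ]
  simp only [finsetSum_coeff, coeff_C_mul_X_pow, Finset.sum_filter, eq_comm]

theorem macWilliams_identity [Finite B] (hχ : ∀ b, (∀ a, χ a b = 1) → b = 0)
    (S : AddSubgroup (ι → B)) (w : ℕ) :
    (Nat.card S : R) * {v ∈ dualCode χ S | hammingNorm v = w}.ncard =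
      ∑ ℓ ∈ Finset.range (Fintype.card ι + 1),
        krawtchouk R (Fintype.card A) (Fintype.card ι) w ℓ *
          {s ∈ (S : Set (ι → B)) | hammingNorm s = ℓ}.ncard := by
  classical
  have := Fintype.ofFinite S
  have hncard : {v ∈ dualCode χ S | hammingNorm v = w}.ncard =
      ((Finset.univ.filter (hammingNorm · = w)).filter (· ∈ dualCode χ S)).card := by
    rw [← Set.ncard_coe_finset]
    simp [Set.ofPred_and, and_comm]
  calc (Nat.card S : R) * {v ∈ dualCode χ S | hammingNorm v = w}.ncard
      = ∑ v : ι → A with hammingNorm v = w, if v ∈ dualCode χ S then (Nat.card S : R) else 0 := by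
        rw [← Finset.sum_filter, Finset.sum_const, nsmul_eq_mul, mul_comm, hncard]
    _ = ∑ v : ι → A with hammingNorm v = w, ∑ s : S, wordChar χ v s :=
        Finset.sum_congr rfl fun v _ => (sum_addSubgroup_addChar_eq_ite S (wordChar χ v)).symm
    _ = ∑ s : S, ∑ v : ι → A with hammingNorm v = w, wordChar χ v s := Finset.sum_comm
    _ = ∑ s : S, krawtchouk R (Fintype.card A) (Fintype.card ι) w (hammingNorm s.1) :=
        Finset.sum_congr rfl fun s _ => sum_wordChar_hammingNorm_eq hχ s.1 w
    _ = _ := sum_comp_hammingNorm (S : Set (ι → B)) _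

end MacWilliams

section Pauli

/-- The nontrivial character `a ↦ (-1) ^ a` of `F₂`. -/
noncomputable def signChar : AddChar (ZMod 2) ℝ := AddChar.zmodChar 2 (neg_one_sq (R := ℝ))

lemma signChar_eq_one_iff (a : ZMod 2) : signChar a = 1 ↔ a = 0 := by
  obtain rfl | rfl : a = 0 ∨ a = 1 := by decide +revert
  · simp
  · norm_num [signChar, AddChar.zmodChar_apply, ZMod.val_one]

/-- The sign `±1` by which two single-qubit Pauli operators commute, as a bicharacter. -/
noncomputable def pauliChar : ZMod 2 × ZMod 2 →+ AddChar (ZMod 2 × ZMod 2) ℝ :=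
  AddMonoidHom.mk'
    (fun a =>
      { toFun b := signChar (a.1 * b.2 + a.2 * b.1)
        map_zero_eq_one' := by simp
        map_add_eq_mul' b c := by
          rw [← AddChar.map_add_eq_mul]
          congr 1
          simp only [Prod.fst_add, Prod.snd_add]
          ring })
    (fun a a' => by
      ext b
      simp only [AddChar.add_apply, AddChar.coe_mk, ← AddChar.map_add_eq_mul]
      congr 1
      simp only [Prod.fst_add, Prod.snd_add]
      ring)

lemma pauliChar_apply (a b : ZMod 2 × ZMod 2) :
    pauliChar a b = signChar (a.1 * b.2 + a.2 * b.1) := rfl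

lemma eq_zero_of_forall_pauliChar_eq_one (b : ZMod 2 × ZMod 2) (h : ∀ a, pauliChar a b = 1) :
    b = 0 := by
  simp only [pauliChar_apply, signChar_eq_one_iff] at h
  exact Prod.ext (by simpa using h (0, 1)) (by simpa using h (1, 0))

variable {n : ℕ}

lemma wordChar_pauliChar (v s : PauliVec n) : wordChar pauliChar v s = signChar (symp v s) := by
  simp only [wordChar_apply, pauliChar_apply, symp]
  exact (map_prod signChar.toMonoidHom _ Finset.univ).symm

lemma dualCode_pauliChar (S : Submodule (ZMod 2) (PauliVec n)) :
    dualCode pauliChar S.toAddSubgroup = sympDual S := by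
  simp only [dualCode, sympDual, wordChar_pauliChar, signChar_eq_one_iff,
    Submodule.mem_toAddSubgroup]

lemma wt_eq_hammingNorm (v : PauliVec n) : wt v = hammingNorm v := rfl

theorem macWilliams_identity_sympDual (S : Submodule (ZMod 2) (PauliVec n)) (w : ℕ) :
    (Nat.card S : ℝ) * {v ∈ sympDual S | wt v = w}.ncard =
      ∑ ℓ ∈ Finset.range (n + 1),
        krawtchouk ℝ 4 n w ℓ * {v ∈ (S : Set (PauliVec n)) | wt v = ℓ}.ncard := by
  have h := macWilliams_identity eq_zero_of_forall_pauliChar_eq_one S.toAddSubgroup w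
  simpa [dualCode_pauliChar, wt_eq_hammingNorm] using h

lemma ncard_sympDual_notMem_wt {S : Submodule (ZMod 2) (PauliVec n)}
    (hself : (S : Set (PauliVec n)) ⊆ sympDual S) (w : ℕ) :
    ({v ∈ sympDual S | v ∉ S ∧ wt v = w}.ncard : ℝ) =
      {v ∈ sympDual S | wt v = w}.ncard - {v ∈ (S : Set (PauliVec n)) | wt v = w}.ncard := by
  have hsub : {v ∈ (S : Set (PauliVec n)) | wt v = w} ⊆ {v ∈ sympDual S | wt v = w} :=
    fun v hv => ⟨hself hv.1, hv.2⟩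
  rw [← Set.cast_ncard_sdiff hsub (Set.toFinite _)]
  congr 2
  ext v
  simp only [Set.mem_sdiff, Set.mem_ofPred_eq, SetLike.mem_coe]
  tauto

end Pauli

/-- The number `L_w` of undetectable errors of weight `w` of an `[[n,k]]` stabilizer code
with stabilizer subspace `S` is obtained from the stabilizer weight distribution `A'`
via the quantum MacWilliams identities. -/
theorem stmt_0 (n k : ℕ) (hn : 1 ≤ n) (hk : k ≤ n)
    (S : Submodule (ZMod 2) (PauliVec n))
    (hdim : Module.finrank (ZMod 2) S = n - k)
    (hself : (S : Set (PauliVec n)) ⊆ sympDual S)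
    (w : ℕ) (hw : w ≤ n) :
    ({v ∈ sympDual S | v ∉ S ∧ wt v = w}.ncard : ℝ)
      = (2 : ℝ) ^ ((k : ℤ) - (n : ℤ)) *
          (∑ ℓ ∈ Finset.range (n + 1), ∑ s ∈ Finset.range (w + 1),
            (ℓ.choose s : ℝ) * ((n - ℓ).choose (w - s) : ℝ) * (-1) ^ s * 3 ^ (w - s) *
              ({v ∈ (S : Set (PauliVec n)) | wt v = ℓ}.ncard : ℝ))
        - ({v ∈ (S : Set (PauliVec n)) | wt v = w}.ncard : ℝ) := by
  have hcard : (Nat.card S : ℝ) = 2 ^ (n - k) := by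
    rw [Module.natCard_eq_pow_finrank (K := ZMod 2), hdim, Nat.card_zmod, Nat.cast_pow,
      Nat.cast_ofNat]
  have hscale : (2 : ℝ) ^ ((k : ℤ) - n) * 2 ^ (n - k) = 1 := by
    rw [← zpow_natCast, ← zpow_add₀ two_ne_zero, Nat.cast_sub hk, sub_add_sub_cancel', sub_self,
      zpow_zero]
  have hkraw (ℓ : ℕ) : krawtchouk ℝ 4 n w ℓ = ∑ s ∈ Finset.range (w + 1),
      (ℓ.choose s : ℝ) * ((n - ℓ).choose (w - s) : ℝ) * (-1) ^ s * 3 ^ (w - s) := by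
    norm_num [krawtchouk]
  simp only [← Finset.sum_mul, ← hkraw, ← macWilliams_identity_sympDual]
  rw [ncard_sympDual_notMem_wt hself, hcard, ← mul_assoc, hscale, one_mul]
end

section
/- Let n ≥ 1, e_g ≥ 0, e_Z ≥ 1 with e_g + e_Z < n, and fix A > 0. For ρ ∈ [0,1] define ρ_L(ρ) = 1 − Σ_{j=0}^{e_g+e_Z} α_j·C(n,j)·ρ^j·(1−ρ)^{n−j}, where α_j = 1 for j ≤ e_g and α_j = (2/(A+2))^j · Σ_{i=j−e_g}^{j} C(j,i)·(A/2)^i for j > e_g. Then the limit as ρ → 0⁺ of ρ_L(ρ)/ρ^{e_g+1} equals C(n, e_g+1)·(2/(A+2))^{e_g+1}. -/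
/-!
Writing `1` as the sum of all Bernstein polynomials of degree `n`, the polynomial `ρ_L` becomes a
Bernstein combination with coefficients `1 - α_j`. The Bernstein polynomial of index `j` is
`C(n,j) ρ^j` plus terms of higher order and `α_j = 1` for `j ≤ e_g`, so the lowest-order term of
`ρ_L` is `(1 - α_{e_g+1}) C(n,e_g+1) ρ^{e_g+1}`. Of the errors of weight `e_g + 1`, only those
without a single `Z` are uncorrectable, which gives `1 - α_{e_g+1} = (2/(A+2))^{e_g+1}`.
-/

open Filter Finset Polynomial Topology

section CommRing

variable {R : Type*} [CommRing R]

theorem coeff_bernsteinPolynomial_of_lt (n : ℕ) {j k : ℕ} (hkj : k < j) :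
    (bernsteinPolynomial R n j).coeff k = 0 := by
  have hdvd : X ^ j ∣ bernsteinPolynomial R n j :=
    dvd_mul_of_dvd_left (dvd_mul_left _ _) _
  exact X_pow_dvd_iff.mp hdvd k hkj

theorem coeff_bernsteinPolynomial_self (n j : ℕ) :
    (bernsteinPolynomial R n j).coeff j = n.choose j := by
  rw [bernsteinPolynomial, mul_assoc, mul_left_comm, ← Polynomial.C_eq_natCast,
    coeff_X_pow_mul', if_pos le_rfl, Nat.sub_self, coeff_C_mul]
  simp [coeff_zero_eq_eval_zero]

theorem coeff_sum_range_bernsteinPolynomial (n : ℕ) (a : ℕ → R) {k N : ℕ} (hk : k < N) :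
    (∑ j ∈ range N, C (a j) * bernsteinPolynomial R n j).coeff k =
      ∑ j ∈ range (k + 1), a j * (bernsteinPolynomial R n j).coeff k := by
  simp only [finsetSum_coeff, coeff_C_mul]
  refine (sum_subset (range_mono hk) fun j _ hj => ?_).symm
  rw [coeff_bernsteinPolynomial_of_lt n (by simpa using hj), mul_zero]

theorem sum_range_bernsteinPolynomial_of_lt {n N : ℕ} (hN : n < N) :
    ∑ j ∈ range N, bernsteinPolynomial R n j = 1 := by
  rw [← bernsteinPolynomial.sum R n]
  refine (sum_subset (range_mono hN) fun j _ hj => ?_).symm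
  exact bernsteinPolynomial.eq_zero_of_lt R (by simpa using hj)

theorem coeff_one_eq_sum_coeff_bernsteinPolynomial (n k : ℕ) :
    (1 : R[X]).coeff k = ∑ j ∈ range (k + 1), (bernsteinPolynomial R n j).coeff k := by
  rw [← sum_range_bernsteinPolynomial_of_lt (show n < n + k + 1 by lia)]
  simpa using coeff_sum_range_bernsteinPolynomial n (1 : ℕ → R) (show k < n + k + 1 by lia)

/-- The logical error rate `ρ_L`, as a polynomial in the physical error rate, of a decoder on `n`
qubits that corrects a proportion `α j` of the errors of weight `j < N` and no error of weight at
least `N`. -/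
noncomputable def logicalErrorPoly (n N : ℕ) (α : ℕ → R) : R[X] :=
  1 - ∑ j ∈ range N, C (α j) * bernsteinPolynomial R n j

theorem eval_logicalErrorPoly (n N : ℕ) (α : ℕ → R) (ρ : R) :
    (logicalErrorPoly n N α).eval ρ =
      1 - ∑ j ∈ range N, α j * (n.choose j : R) * ρ ^ j * (1 - ρ) ^ (n - j) := by
  simp [logicalErrorPoly, bernsteinPolynomial, eval_finsetSum, mul_assoc]

theorem coeff_logicalErrorPoly (n : ℕ) (α : ℕ → R) {k N : ℕ} (hk : k < N) :
    (logicalErrorPoly n N α).coeff k =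
      ∑ j ∈ range (k + 1), (1 - α j) * (bernsteinPolynomial R n j).coeff k := by
  rw [logicalErrorPoly, coeff_sub, coeff_one_eq_sum_coeff_bernsteinPolynomial n k,
    coeff_sum_range_bernsteinPolynomial n α hk, ← sum_sub_distrib]
  simp only [sub_mul, one_mul]

section CorrectsBelow

variable {α : ℕ → R} {m N : ℕ}

theorem X_pow_dvd_logicalErrorPoly (n : ℕ) (hm : m ≤ N) (hα : ∀ j < m, α j = 1) :
    X ^ m ∣ logicalErrorPoly n N α := by
  refine X_pow_dvd_iff.mpr fun k hk => ?_
  rw [coeff_logicalErrorPoly n α (hk.trans_le hm)]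
  refine sum_eq_zero fun j hj => ?_
  rw [hα j ((mem_range.mp hj).trans_le hk), sub_self, zero_mul]

theorem coeff_logicalErrorPoly_of_forall_lt (n : ℕ) (hm : m < N) (hα : ∀ j < m, α j = 1) :
    (logicalErrorPoly n N α).coeff m = n.choose m * (1 - α m) := by
  have hlow : ∑ j ∈ range m, (1 - α j) * (bernsteinPolynomial R n j).coeff m = 0 :=
    sum_eq_zero fun j hj => by rw [hα j (mem_range.mp hj), sub_self, zero_mul]
  rw [coeff_logicalErrorPoly n α hm, sum_range_succ, hlow, zero_add,
    coeff_bernsteinPolynomial_self, mul_comm]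

end CorrectsBelow

theorem sum_Icc_one_choose_mul_pow (x : R) (m : ℕ) :
    ∑ i ∈ Icc 1 m, (m.choose i : R) * x ^ i = (x + 1) ^ m - 1 := by
  have hbinom : (x + 1) ^ m = ∑ i ∈ range (m + 1), (m.choose i : R) * x ^ i := by
    simp only [add_pow, one_pow, mul_one, mul_comm]
  rw [hbinom, range_eq_Ico, sum_eq_sum_Ico_succ_bot m.succ_pos]
  simp [Ico_add_one_right_eq_Icc]

end CommRing

section Field

variable {𝕜 : Type*} [Field 𝕜]

/-- The proportion `α_j` of the errors of weight `j` on a channel of bias `A` that are corrected by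
a decoder for `eg` generic and additional `Z` errors. Each error is a `Z` with probability
`A/(A+2)`, so `i` of the `j` errors are `Z` with probability
`C(j,i) (A/(A+2))^i (2/(A+2))^(j-i) = (2/(A+2))^j C(j,i) (A/2)^i`, and at most `eg` of the others
are allowed. -/
def correctableFraction (eg : ℕ) (A : 𝕜) (j : ℕ) : 𝕜 :=
  if j ≤ eg then 1
  else (2 / (A + 2)) ^ j * ∑ i ∈ Icc (j - eg) j, (j.choose i : 𝕜) * (A / 2) ^ i

theorem correctableFraction_of_le {eg j : ℕ} (A : 𝕜) (hj : j ≤ eg) :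
    correctableFraction eg A j = 1 :=
  if_pos hj

theorem one_sub_correctableFraction_add_one [NeZero (2 : 𝕜)] (eg : ℕ) {A : 𝕜} (hA : A + 2 ≠ 0) :
    1 - correctableFraction eg A (eg + 1) = (2 / (A + 2)) ^ (eg + 1) := by
  have hinv : 2 / (A + 2) * (A / 2 + 1) = 1 := by
    have h2 : (2 : 𝕜) ≠ 0 := two_ne_zero
    field_simp
  rw [correctableFraction, if_neg (Nat.not_succ_le_self eg), Nat.add_sub_cancel_left,
    sum_Icc_one_choose_mul_pow, mul_sub, ← mul_pow, hinv, one_pow, mul_one, sub_sub_cancel]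

variable [TopologicalSpace 𝕜] [IsTopologicalRing 𝕜]

theorem tendsto_eval_div_pow_nhdsNE_zero {p : 𝕜[X]} {m : ℕ} (hp : X ^ m ∣ p) :
    Tendsto (fun x => p.eval x / x ^ m) (𝓝[≠] 0) (𝓝 (p.coeff m)) := by
  obtain ⟨q, rfl⟩ := hp
  have hq : Tendsto (fun x => q.eval x) (𝓝[≠] 0) (𝓝 (q.eval 0)) :=
    (q.continuous.tendsto 0).mono_left nhdsWithin_le_nhds
  rw [coeff_X_pow_mul', if_pos le_rfl, Nat.sub_self, coeff_zero_eq_eval_zero]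
  refine hq.congr' ?_
  filter_upwards [self_mem_nhdsWithin] with x hx
  rw [eval_mul, eval_pow, eval_X, mul_div_cancel_left₀ _ (pow_ne_zero m hx)]

theorem tendsto_logicalErrorPoly_div_pow (n : ℕ) {α : ℕ → 𝕜} {m N : ℕ} (hm : m < N)
    (hα : ∀ j < m, α j = 1) :
    Tendsto (fun ρ => (logicalErrorPoly n N α).eval ρ / ρ ^ m) (𝓝[≠] 0)
      (𝓝 (n.choose m * (1 - α m))) := by
  rw [← coeff_logicalErrorPoly_of_forall_lt n hm hα]
  exact tendsto_eval_div_pow_nhdsNE_zero (X_pow_dvd_logicalErrorPoly n hm.le hα)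

theorem stmt_7_general [NeZero (2 : 𝕜)] (n eg : ℕ) {eZ : ℕ} (heZ : 1 ≤ eZ) {A : 𝕜}
    (hA : A + 2 ≠ 0) :
    Tendsto
      (fun ρ : 𝕜 =>
        (1 - ∑ j ∈ range (eg + eZ + 1),
            (if j ≤ eg then (1 : 𝕜)
              else (2 / (A + 2)) ^ j *
                ∑ i ∈ Icc (j - eg) j, (j.choose i : 𝕜) * (A / 2) ^ i) *
              (n.choose j : 𝕜) * ρ ^ j * (1 - ρ) ^ (n - j)) / ρ ^ (eg + 1))
      (𝓝[≠] 0)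
      (𝓝 ((n.choose (eg + 1) : 𝕜) * (2 / (A + 2)) ^ (eg + 1))) := by
  have hlim := tendsto_logicalErrorPoly_div_pow n (show eg + 1 < eg + eZ + 1 by lia)
    fun j hj => correctableFraction_of_le A (Nat.lt_succ_iff.mp hj)
  rw [one_sub_correctableFraction_add_one eg hA] at hlim
  simpa only [eval_logicalErrorPoly, correctableFraction] using hlim

end Field

/-- Asymptotic slope of the asymmetric bounded-distance logical error rate on a
channel with finite bias `A`: with
`ρ_L(ρ) = 1 − Σ_{j=0}^{e_g+e_Z} α_j·C(n,j)·ρ^j·(1−ρ)^{n−j}` where `α_j = 1` for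
`j ≤ e_g` and `α_j = (2/(A+2))^j · Σ_{i=j−e_g}^{j} C(j,i)·(A/2)^i` otherwise, one has
`ρ_L(ρ)/ρ^{e_g+1} → C(n,e_g+1)·(2/(A+2))^{e_g+1}` as `ρ → 0⁺`. -/
theorem stmt_7 (n eg eZ : ℕ) (hn : 1 ≤ n) (heZ : 1 ≤ eZ) (h : eg + eZ < n)
    (A : ℝ) (hA : 0 < A) :
    Filter.Tendsto
      (fun ρ : ℝ =>
        (1 - ∑ j ∈ Finset.range (eg + eZ + 1),
            (if j ≤ eg then (1 : ℝ)
              else (2 / (A + 2)) ^ j *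
                ∑ i ∈ Finset.Icc (j - eg) j, (j.choose i : ℝ) * (A / 2) ^ i) *
              (n.choose j : ℝ) * ρ ^ j * (1 - ρ) ^ (n - j)) / ρ ^ (eg + 1))
      (nhdsWithin 0 (Set.Ioi 0))
      (nhds ((n.choose (eg + 1) : ℝ) * (2 / (A + 2)) ^ (eg + 1))) :=
  (stmt_7_general n eg heZ (by positivity)).mono_left (nhdsGT_le_nhdsNE 0)
end

section
/- Let S ⊆ ((F₂)²)¹³ be the F₂-span of the twelve symplectic vectors representing the [[13,1,3]] surface code generators: G₁ = X₁X₂X₄, G₂ = X₂X₃X₅, G₃ = Z₁Z₄Z₆, G₄ = Z₂Z₄Z₅Z₇, G₅ = Z₃Z₅Z₈, G₆ = X₄X₆X₇X₉, G₇ = X₅X₇X₈X₁₀, G₈ = Z₆Z₉Z₁₁, G₉ = Z₇Z₉Z₁₀Z₁₂, G₁₀ = Z₈Z₁₀Z₁₃, G₁₁ = X₉X₁₁X₁₂, G₁₂ = X₁₀X₁₂X₁₃ (Xᵢ denotes (1,0) in position i; Zᵢ denotes (0,1) in position i). Then for L_w = #{v ∈ S^⊥ₛ \ S : wt(v) = w}: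 L₃ = 6, L₄ = 24, L₅ = 75, L₆ = 240, L₇ = 648, L₈ = 1440, L₉ = 2538, L₁₀ = 3216, L₁₁ = 2634, L₁₂ = 1224, L₁₃ = 243, and L_w = 0 for all other w. -/
/-- The vector with `X` (i.e. `(1,0)`) on the support `s` and identity elsewhere. -/
def xvec (n : ℕ) (s : Finset (Fin n)) : PauliVec n := fun i => if i ∈ s then (1, 0) else 0

/-- The vector with `Z` (i.e. `(0,1)`) on the support `s` and identity elsewhere. -/
def zvec (n : ℕ) (s : Finset (Fin n)) : PauliVec n := fun i => if i ∈ s then (0, 1) else 0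

/-- The stabilizer subspace of the `[[13,1,3]]` surface code, spanned by
`X₁X₂X₄, X₂X₃X₅, Z₁Z₄Z₆, Z₂Z₄Z₅Z₇, Z₃Z₅Z₈, X₄X₆X₇X₉, X₅X₇X₈X₁₀, Z₆Z₉Z₁₁,
Z₇Z₉Z₁₀Z₁₂, Z₈Z₁₀Z₁₃, X₉X₁₁X₁₂, X₁₀X₁₂X₁₃`. -/
def Surf13 : Submodule (ZMod 2) (PauliVec 13) :=
  Submodule.span (ZMod 2)
    {xvec 13 {0, 1, 3}, xvec 13 {1, 2, 4},
     zvec 13 {0, 3, 5}, zvec 13 {1, 3, 4, 6}, zvec 13 {2, 4, 7},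
     xvec 13 {3, 5, 6, 8}, xvec 13 {4, 6, 7, 9},
     zvec 13 {5, 8, 10}, zvec 13 {6, 8, 9, 11}, zvec 13 {7, 9, 12},
     xvec 13 {8, 10, 11}, xvec 13 {9, 11, 12}}

/-!
The stabilizer space `S` is isotropic, i.e. contained in its symplectic dual, so the enumerator of
the undetectable errors is the difference of the weight enumerators of `S^⊥ₛ` and `S`. The
MacWilliams identity computes the former from the latter: expanding the indicator function of `S^⊥ₛ`
as a character sum over `S` and interchanging the sums leaves, for each `s ∈ S`, a product over the
qubits with a factor `1 - X` where `s` is supported and `1 + 3 * X` elsewhere. Only the weights of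
the `2 ^ 12` elements of `S` remain to be enumerated.
-/

namespace PauliVec

open Polynomial Submodule
open scoped Finset

variable {n : ℕ}

section SymplecticForm

theorem symp_comm (u v : PauliVec n) : symp u v = symp v u :=
  Finset.sum_congr rfl fun _ _ => by ring

theorem symp_add_left (u u' v : PauliVec n) : symp (u + u') v = symp u v + symp u' v := by
  simp only [symp, ← Finset.sum_add_distrib, Pi.add_apply, Prod.fst_add, Prod.snd_add]
  exact Finset.sum_congr rfl fun _ _ => by ring

theorem symp_smul_left (c : ZMod 2) (u v : PauliVec n) : symp (c • u) v = c • symp u v := by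
  simp only [symp, Finset.mul_sum, Pi.smul_apply, Prod.smul_fst, Prod.smul_snd, smul_eq_mul]
  exact Finset.sum_congr rfl fun _ _ => by ring

/-- The symplectic inner product, bundled as a bilinear form to apply linear algebra to it. -/
def sympForm (n : ℕ) : LinearMap.BilinForm (ZMod 2) (PauliVec n) :=
  LinearMap.mk₂ (ZMod 2) symp symp_add_left symp_smul_left
    (fun u v v' => by simp only [symp_comm u, symp_add_left])
    (fun c u v => by simp only [symp_comm u, symp_smul_left])

theorem sympForm_apply (u v : PauliVec n) : sympForm n u v = symp u v := rfl

theorem span_range_subset_sympDual {ι : Type*} {g : ι → PauliVec n}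
    (hg : ∀ i j, symp (g i) (g j) = 0) :
    (span (ZMod 2) (Set.range g) : Set (PauliVec n)) ⊆
      sympDual (span (ZMod 2) (Set.range g)) := by
  have span_le_ker {v : PauliVec n} (hv : ∀ i, symp v (g i) = 0) :
      span (ZMod 2) (Set.range g) ≤ LinearMap.ker (sympForm n v) :=
    span_le.2 (Set.range_subset_iff.2 hv)
  intro v hv
  exact span_le_ker fun i => (symp_comm v (g i)).trans (span_le_ker (hg i) hv)

theorem linearIndependent_of_symp_eq_ite {ι : Type*} [DecidableEq ι] {g d : ι → PauliVec n}
    (h : ∀ i j, symp (d i) (g j) = if i = j then 1 else 0) : LinearIndependent (ZMod 2) g :=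
  .of_pairwise_dual_eq_zero_one g (fun i => sympForm n (d i))
    (fun i j hij => by simp [sympForm_apply, h, hij]) fun i => by simp [sympForm_apply, h]

end SymplecticForm

section WeightEnumerator

/-- The number of elements of weight `w` in a set of Pauli vectors. -/
noncomputable def weightDistribution (A : Set (PauliVec n)) (w : ℕ) : ℕ := {v ∈ A | wt v = w}.ncard

open scoped Classical in
/-- The weight enumerator `∑ v ∈ A, X ^ wt v` of a set of Pauli vectors. Its coefficients are
integers, rather than natural numbers, for the sake of the `1 - X` in the MacWilliams identity. -/
noncomputable def weightEnumerator (A : Set (PauliVec n)) : ℤ[X] := ∑ v with v ∈ A, X ^ wt v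

theorem wt_le (v : PauliVec n) : wt v ≤ n :=
  hammingNorm_le_card_fintype.trans (Fintype.card_fin n).le

theorem wt_eq_sum_ite (v : PauliVec n) : wt v = ∑ i, if v i = 0 then 0 else 1 := by
  simp [wt, Finset.card_filter]

theorem card_filter_eq_zero (v : PauliVec n) : #{i | v i = 0} = n - wt v :=
  Nat.eq_sub_of_add_eq <|
    (Finset.card_filter_add_card_filter_not fun i => v i = 0).trans (Finset.card_fin n)

theorem coeff_weightEnumerator (A : Set (PauliVec n)) (w : ℕ) :
    (weightEnumerator A).coeff w = weightDistribution A w := by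
  classical
  simp [weightEnumerator, weightDistribution, coeff_X_pow, Set.ncard_eq_toFinset_card',
    Finset.filter_filter, eq_comm]

theorem weightEnumerator_sdiff {A B : Set (PauliVec n)} (h : A ⊆ B) :
    weightEnumerator (B \ A) = weightEnumerator B - weightEnumerator A := by
  classical
  simp only [weightEnumerator, Set.mem_sdiff, Finset.filter_and_not]
  exact Finset.sum_sdiff_eq_sub (Finset.monotone_filter_right _ fun _ _ hv => h hv)

open scoped Classical in
theorem sum_wt_eq_sum_weightDistribution {R : Type*} [CommSemiring R] (A : Set (PauliVec n))
    (f : ℕ → R) :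
    ∑ v with v ∈ A, f (wt v) = ∑ w : Fin (n + 1), weightDistribution A w * f w := by
  have wt_mem_range : ∀ v ∈ ({v | v ∈ A} : Finset (PauliVec n)), wt v ∈ Finset.range (n + 1) :=
    fun v _ => Finset.mem_range_succ_iff.2 (wt_le v)
  rw [← Finset.sum_fiberwise_of_maps_to wt_mem_range, ← Fin.sum_univ_eq_sum_range]
  refine Finset.sum_congr rfl fun w _ => ?_
  calc ∑ v ∈ {v | v ∈ A} with wt v = w, f (wt v)
      = ∑ v ∈ {v | v ∈ A} with wt v = w, f w :=
        Finset.sum_congr rfl fun v hv => by rw [(Finset.mem_filter.1 hv).2]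
    _ = weightDistribution A w * f w := by
        simp [weightDistribution, Set.ncard_eq_toFinset_card', Finset.filter_filter]

end WeightEnumerator

section MacWilliams

/-- The character `a ↦ (-1) ^ a` of `F₂`, with values in the ring of weight enumerators. -/
noncomputable def signChar : AddChar (ZMod 2) ℤ[X] := AddChar.zmodChar 2 neg_one_sq

theorem signChar_one : signChar 1 = -1 := pow_one _

theorem signChar_eq_one_iff (a : ZMod 2) : signChar a = 1 ↔ a = 0 := by
  obtain rfl | rfl : a = 0 ∨ a = 1 := by decide +revert
  · simp
  · norm_num [signChar_one]

theorem signChar_symp (u v : PauliVec n) :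
    signChar (symp u v) = ∏ i, signChar ((u i).1 * (v i).2 + (u i).2 * (v i).1) :=
  map_prod signChar.toMonoidHom _ _

open scoped Classical in
theorem sum_signChar_symp (S : Submodule (ZMod 2) (PauliVec n)) (v : PauliVec n) :
    ∑ s : S, signChar (symp v s) = if v ∈ sympDual S then (Nat.card S : ℤ[X]) else 0 := by
  let ψ : AddChar S ℤ[X] :=
    signChar.compAddMonoidHom ((sympForm n v).toAddMonoidHom.comp S.subtype.toAddMonoidHom)
  have ψ_eq_zero_iff : ψ = 0 ↔ v ∈ sympDual S :=
    AddChar.ext_iff.trans <| Subtype.forall.trans <|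
      forall₂_congr fun s _ => signChar_eq_one_iff (symp v s)
  rw [← ψ_eq_zero_iff]
  exact Nat.card_eq_fintype_card (α := S) ▸ AddChar.sum_eq_ite ψ

theorem sum_signChar_mul_X_pow (q : ZMod 2 × ZMod 2) :
    ∑ p : ZMod 2 × ZMod 2, signChar (p.1 * q.2 + p.2 * q.1) * X ^ (if p = 0 then 0 else 1) =
      if q = 0 then 1 + 3 * X else 1 - X := by
  obtain ⟨a, b⟩ := q
  have univ_eq : (Finset.univ : Finset (ZMod 2)) = {0, 1} := rfl
  calc _ = 1 + (signChar a + signChar b + signChar b * signChar a) * X := by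
        simp only [Fintype.sum_prod_type, univ_eq, Finset.sum_pair zero_ne_one, Prod.mk_eq_zero,
          zero_mul, one_mul, AddChar.map_zero_eq_one, AddChar.map_add_eq_mul, one_ne_zero, and_true,
          and_false, ↓reduceIte, pow_zero, pow_one]
        ring
    _ = _ := by
        obtain rfl | rfl : a = 0 ∨ a = 1 := by decide +revert
        all_goals obtain rfl | rfl : b = 0 ∨ b = 1 := by decide +revert
        all_goals simp only [AddChar.map_zero_eq_one, signChar_one, Prod.mk_eq_zero, one_ne_zero,
          and_self, and_true, and_false, ↓reduceIte]
        all_goals ring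

theorem sum_signChar_symp_mul_X_pow_wt (s : PauliVec n) :
    ∑ v, signChar (symp v s) * X ^ wt v = (1 - X) ^ wt s * (1 + 3 * X) ^ (n - wt s) := by
  calc _ = ∑ v : PauliVec n, ∏ i,
          signChar ((v i).1 * (s i).2 + (v i).2 * (s i).1) * X ^ (if v i = 0 then 0 else 1) := by
        simp only [Finset.prod_mul_distrib, Finset.prod_pow_eq_pow_sum, ← wt_eq_sum_ite,
          signChar_symp]
    _ = ∏ i, if s i = 0 then 1 + 3 * X else 1 - X := by
        simp only [← sum_signChar_mul_X_pow, Fintype.prod_sum]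
    _ = _ := by
        rw [Finset.prod_ite, Finset.prod_const, Finset.prod_const, card_filter_eq_zero, mul_comm]
        rfl

theorem macWilliams_identity (S : Submodule (ZMod 2) (PauliVec n)) :
    Nat.card S * weightEnumerator (sympDual S) =
      ∑ w : Fin (n + 1), (weightDistribution (S : Set (PauliVec n)) w : ℤ[X]) *
        ((1 - X) ^ (w : ℕ) * (1 + 3 * X) ^ (n - (w : ℕ))) := by
  classical
  let dualTerm (w : ℕ) : ℤ[X] := (1 - X) ^ w * (1 + 3 * X) ^ (n - w)
  calc (Nat.card S : ℤ[X]) * weightEnumerator (sympDual S)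
      = ∑ v, (∑ s : S, signChar (symp v (s : PauliVec n))) * X ^ wt v := by
        simp only [sum_signChar_symp, weightEnumerator, Finset.sum_filter, Finset.mul_sum, mul_ite,
          ite_mul, zero_mul, mul_zero]
    _ = ∑ s : S, ∑ v, signChar (symp v (s : PauliVec n)) * X ^ wt v := by
        simp only [Finset.sum_mul]
        exact Finset.sum_comm
    _ = ∑ s : S, dualTerm (wt (s : PauliVec n)) :=
        Finset.sum_congr rfl fun s _ => sum_signChar_symp_mul_X_pow_wt (s : PauliVec n)
    _ = ∑ s with s ∈ (S : Set (PauliVec n)), dualTerm (wt s) :=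
        (Finset.sum_subtype _ (by simp) fun s => dualTerm (wt s)).symm
    _ = _ := sum_wt_eq_sum_weightDistribution _ dualTerm

end MacWilliams

section Enumeration

/-- The supports of the `X` and `Z` parts of a Pauli vector, encoded as binary numbers because the
kernel evaluates bitwise operations on natural numbers efficiently. -/
def bits (v : PauliVec n) : ℕ × ℕ :=
  (Nat.ofBits fun i => decide ((v i).1 = 1), Nat.ofBits fun i => decide ((v i).2 = 1))

/-- The number of vectors of weight `w` among the `2 ^ m` sums of `v` and a subfamily of `g`, where
Pauli vectors on `n` qubits are given by their `bits`. It makes weight distributions of spans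
computable. -/
def countSubsetSums (n w : ℕ) : {m : ℕ} → (Fin m → ℕ × ℕ) → ℕ × ℕ → ℕ
  | 0, _, v => if Nat.count (fun i => (v.1 ||| v.2).testBit i) n = w then 1 else 0
  | _ + 1, g, v => countSubsetSums n w (Fin.tail g) v +
      countSubsetSums n w (Fin.tail g) (v.1 ^^^ (g 0).1, v.2 ^^^ (g 0).2)

theorem bits_zero : bits (0 : PauliVec n) = 0 := by
  refine Prod.ext ?_ ?_ <;> refine Nat.eq_of_testBit_eq fun i => ?_ <;>
    simp [bits, Nat.testBit_ofBits]

theorem bits_add (u v : PauliVec n) :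
    bits (u + v) = ((bits u).1 ^^^ (bits v).1, (bits u).2 ^^^ (bits v).2) := by
  have decide_add (a b : ZMod 2) : decide (a + b = 1) = (decide (a = 1) ^^ decide (b = 1)) := by
    revert a b; decide
  refine Prod.ext ?_ ?_ <;> refine Nat.eq_of_testBit_eq fun i => ?_ <;> by_cases hi : i < n <;>
    simp [bits, Nat.testBit_ofBits, hi, decide_add]

theorem count_testBit_bits (v : PauliVec n) :
    Nat.count (fun i => ((bits v).1 ||| (bits v).2).testBit i) n = wt v := by
  have ne_zero_iff (p : ZMod 2 × ZMod 2) : p.1 = 1 ∨ p.2 = 1 ↔ p ≠ 0 := by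
    revert p; decide
  rw [Nat.count_eq_card_filter_range, Finset.card_filter, Finset.sum_range, wt, Finset.card_filter]
  simp [bits, ← ne_zero_iff]

theorem card_filter_wt_add_sum_smul (w : ℕ) {m : ℕ} (g : Fin m → PauliVec n) (v : PauliVec n) :
    #{c : Fin m → ZMod 2 | wt (v + ∑ i, c i • g i) = w} =
      countSubsetSums n w (bits ∘ g) (bits v) := by
  induction m generalizing v with
  | zero =>
    rw [countSubsetSums, count_testBit_bits, Finset.card_filter]
    simp
  | succ m ih =>
    have univ_eq : (Finset.univ : Finset (ZMod 2)) = {0, 1} := rfl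
    let tailSum (c : Fin m → ZMod 2) : PauliVec n := ∑ i, c i • g i.succ
    calc #{c : Fin (m + 1) → ZMod 2 | wt (v + ∑ i, c i • g i) = w}
        = ∑ a : ZMod 2, ∑ c, if wt (v + a • g 0 + tailSum c) = w then 1 else 0 := by
          rw [Finset.card_filter, ← (Fin.consEquiv fun _ => ZMod 2).sum_comp, Fintype.sum_prod_type]
          simp only [Fin.consEquiv_apply, Fin.sum_univ_succ, Fin.cons_zero, Fin.cons_succ,
            add_assoc, tailSum]
      _ = #{c | wt (v + tailSum c) = w} + #{c | wt (v + g 0 + tailSum c) = w} := by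
          simp only [univ_eq, Finset.sum_pair zero_ne_one, zero_smul, add_zero, one_smul,
            Finset.card_filter]
      _ = countSubsetSums n w (bits ∘ g) (bits v) := by
          rw [countSubsetSums, Function.comp_apply, ← bits_add]
          exact congr_arg₂ _ (ih (Fin.tail g) v) (ih (Fin.tail g) (v + g 0))

theorem weightDistribution_span_range {m : ℕ} {g : Fin m → PauliVec n}
    (hg : LinearIndependent (ZMod 2) g) (w : ℕ) :
    weightDistribution (span (ZMod 2) (Set.range g) : Set (PauliVec n)) w =
      countSubsetSums n w (bits ∘ g) 0 := by
  rw [weightDistribution, ← bits_zero, ← card_filter_wt_add_sum_smul]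
  let L := Fintype.linearCombination (ZMod 2) g
  calc {v ∈ (span (ZMod 2) (Set.range g) : Set (PauliVec n)) | wt v = w}.ncard
      = (L '' (L ⁻¹' {v | wt v = w})).ncard := by
        rw [Set.image_preimage_eq_range_inter, ← LinearMap.coe_range,
          Fintype.range_linearCombination]
        rfl
    _ = (L ⁻¹' {v | wt v = w}).ncard :=
        Set.ncard_image_of_injective _ hg.fintypeLinearCombination_injective
    _ = #{c : Fin m → ZMod 2 | wt (0 + ∑ i, c i • g i) = w} := by
        simp [Set.ncard_eq_toFinset_card', L, Fintype.linearCombination_apply]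

end Enumeration

section SurfaceCode

/-- The stabilizer generators of the surface code, as a family indexed in the order of `Surf13`. -/
def surf13Gen : Fin 12 → PauliVec 13 :=
  ![xvec 13 {0, 1, 3}, xvec 13 {1, 2, 4},
    zvec 13 {0, 3, 5}, zvec 13 {1, 3, 4, 6}, zvec 13 {2, 4, 7},
    xvec 13 {3, 5, 6, 8}, xvec 13 {4, 6, 7, 9},
    zvec 13 {5, 8, 10}, zvec 13 {6, 8, 9, 11}, zvec 13 {7, 9, 12},
    xvec 13 {8, 10, 11}, xvec 13 {9, 11, 12}]

/-- Destabilizers of the surface code: the `i`-th one anticommutes with the `i`-th stabilizer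
generator and commutes with all others, which certifies that the generators are independent. -/
def surf13Destab : Fin 12 → PauliVec 13 :=
  ![zvec 13 {0}, zvec 13 {2}, xvec 13 {0}, xvec 13 {1}, xvec 13 {2}, zvec 13 {5}, zvec 13 {7},
    xvec 13 {10}, xvec 13 {11}, xvec 13 {12}, zvec 13 {10}, zvec 13 {12}]

theorem span_range_surf13Gen : span (ZMod 2) (Set.range surf13Gen) = Surf13 := by
  simp only [Surf13, surf13Gen, Matrix.range_cons, Matrix.range_empty, Set.union_empty,
    Set.singleton_union]

theorem linearIndependent_surf13Gen : LinearIndependent (ZMod 2) surf13Gen :=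
  linearIndependent_of_symp_eq_ite (d := surf13Destab) (by decide +kernel)

theorem card_surf13 : Nat.card Surf13 = 2 ^ 12 := by
  rw [Module.natCard_eq_pow_finrank (K := ZMod 2), ← span_range_surf13Gen,
    finrank_span_eq_card linearIndependent_surf13Gen, Nat.card_zmod, Fintype.card_fin]

theorem surf13_subset_sympDual : (Surf13 : Set (PauliVec 13)) ⊆ sympDual Surf13 := by
  rw [← span_range_surf13Gen]
  exact span_range_subset_sympDual (by decide +kernel)

theorem weightDistribution_surf13 (w : Fin 14) :
    weightDistribution (Surf13 : Set (PauliVec 13)) w =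
      ![1, 0, 0, 8, 12, 24, 76, 192, 453, 864, 1116, 888, 390, 72] w := by
  rw [← span_range_surf13Gen, weightDistribution_span_range linearIndependent_surf13Gen]
  revert w
  decide +kernel

theorem sum_weightDistribution_surf13_mul {R : Type*} [CommSemiring R] (f : ℕ → R) :
    ∑ w : Fin 14, weightDistribution (Surf13 : Set (PauliVec 13)) w * f w =
      f 0 + 8 * f 3 + 12 * f 4 + 24 * f 5 + 76 * f 6 + 192 * f 7 + 453 * f 8 + 864 * f 9 +
        1116 * f 10 + 888 * f 11 + 390 * f 12 + 72 * f 13 := by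
  simp [weightDistribution_surf13, Fin.sum_univ_succ, add_assoc]

theorem weightEnumerator_surf13 : weightEnumerator (Surf13 : Set (PauliVec 13)) =
    1 + 8 * X ^ 3 + 12 * X ^ 4 + 24 * X ^ 5 + 76 * X ^ 6 + 192 * X ^ 7 + 453 * X ^ 8 +
      864 * X ^ 9 + 1116 * X ^ 10 + 888 * X ^ 11 + 390 * X ^ 12 + 72 * X ^ 13 := by
  rw [weightEnumerator, sum_wt_eq_sum_weightDistribution _ fun w => X ^ w,
    sum_weightDistribution_surf13_mul, pow_zero]

theorem weightEnumerator_sympDual_surf13 : weightEnumerator (sympDual Surf13) =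
    1 + 14 * X ^ 3 + 36 * X ^ 4 + 99 * X ^ 5 + 316 * X ^ 6 + 840 * X ^ 7 + 1893 * X ^ 8 +
      3402 * X ^ 9 + 4332 * X ^ 10 + 3522 * X ^ 11 + 1614 * X ^ 12 + 315 * X ^ 13 := by
  have two_pow_ne_zero : ((2 ^ 12 : ℕ) : ℤ[X]) ≠ 0 := by simp
  have card_mul_eq := macWilliams_identity Surf13
  rw [card_surf13, sum_weightDistribution_surf13_mul
    fun w => ((1 - X) ^ w * (1 + 3 * X) ^ (13 - w) : ℤ[X])] at card_mul_eq
  refine mul_left_cancel₀ two_pow_ne_zero (card_mul_eq.trans ?_)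
  push_cast
  ring

theorem weightEnumerator_sympDual_sdiff_surf13 : weightEnumerator (sympDual Surf13 \ Surf13) =
    6 * X ^ 3 + 24 * X ^ 4 + 75 * X ^ 5 + 240 * X ^ 6 + 648 * X ^ 7 + 1440 * X ^ 8 +
      2538 * X ^ 9 + 3216 * X ^ 10 + 2634 * X ^ 11 + 1224 * X ^ 12 + 243 * X ^ 13 := by
  rw [weightEnumerator_sdiff surf13_subset_sympDual, weightEnumerator_sympDual_surf13,
    weightEnumerator_surf13]
  ring

end SurfaceCode

end PauliVec

/-- The undetectable-error weight enumerator of the `[[13,1,3]]` surface code is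
`L(z) = 6z³ + 24z⁴ + 75z⁵ + 240z⁶ + 648z⁷ + 1440z⁸ + 2538z⁹ + 3216z¹⁰ + 2634z¹¹
+ 1224z¹² + 243z¹³`. -/
theorem stmt_18 :
    {v ∈ sympDual Surf13 | v ∉ Surf13 ∧ wt v = 3}.ncard = 6 ∧
    {v ∈ sympDual Surf13 | v ∉ Surf13 ∧ wt v = 4}.ncard = 24 ∧
    {v ∈ sympDual Surf13 | v ∉ Surf13 ∧ wt v = 5}.ncard = 75 ∧
    {v ∈ sympDual Surf13 | v ∉ Surf13 ∧ wt v = 6}.ncard = 240 ∧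
    {v ∈ sympDual Surf13 | v ∉ Surf13 ∧ wt v = 7}.ncard = 648 ∧
    {v ∈ sympDual Surf13 | v ∉ Surf13 ∧ wt v = 8}.ncard = 1440 ∧
    {v ∈ sympDual Surf13 | v ∉ Surf13 ∧ wt v = 9}.ncard = 2538 ∧
    {v ∈ sympDual Surf13 | v ∉ Surf13 ∧ wt v = 10}.ncard = 3216 ∧
    {v ∈ sympDual Surf13 | v ∉ Surf13 ∧ wt v = 11}.ncard = 2634 ∧
    {v ∈ sympDual Surf13 | v ∉ Surf13 ∧ wt v = 12}.ncard = 1224 ∧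
    {v ∈ sympDual Surf13 | v ∉ Surf13 ∧ wt v = 13}.ncard = 243 ∧
    ∀ w : ℕ, w < 3 ∨ w > 13 →
      {v ∈ sympDual Surf13 | v ∉ Surf13 ∧ wt v = w}.ncard = 0 := by
  have ncard_eq (w : ℕ) : {v ∈ sympDual Surf13 | v ∉ Surf13 ∧ wt v = w}.ncard =
      PauliVec.weightDistribution (sympDual Surf13 \ Surf13) w := by
    simp only [PauliVec.weightDistribution, Set.mem_sdiff, SetLike.mem_coe, and_assoc]
  simp only [ncard_eq]
  zify
  simp only [← PauliVec.coeff_weightEnumerator, PauliVec.weightEnumerator_sympDual_sdiff_surf13,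
    Polynomial.coeff_add, Polynomial.coeff_ofNat_mul, Polynomial.coeff_X_pow]
  refine ⟨by simp, by simp, by simp, by simp, by simp, by simp, by simp, by simp, by simp,
    by simp, by simp, fun w hw => ?_⟩
  have w_ne (k : ℕ) (hk : 3 ≤ k ∧ k ≤ 13) : w ≠ k := by lia
  simp [w_ne]
end
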